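/- In the Cantor tower over F_p with p odd, for every i ≥ 0 the field U_i has degree [U_i : F_p] = p^i · d over F_p, and for every i ≥ 1 one has Tr_{U_i/U_{i−1}}(γ_i) = −γ_{i−1}. -/

import Mathlib

open IntermediateField

set_option synthInstance.maxHeartbeats 1000000

/-!
Write `℘ y = y ^ p - y`. If `c ∉ ℘ K` and `L = K(x)` with `℘ x = c`, then `L/K` is Galois of degree
`p` with conjugates `x + a`, `a ∈ F_p`, of `x`. Hence `Tr (x ^ n)` is the power sum `∑ a ^ n` for
`n < p`, and reducing `x ^ (2p - 1) = x + c + c x ^ (p - 1)` gives `Tr (x ^ (2p - 1)) = -c`.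
The trace commutes with `℘`, so `x ^ (2p - 1) ∈ ℘ L` would force `-c ∈ ℘ K`: the condition
`c ∉ ℘ K` propagates up the tower. It holds at the bottom because the trace to `F_p` kills `℘ U_0`.
-/

open Polynomial

section FiniteFieldSums

variable {k : Type*} [Field k] [Fintype k]

theorem sum_pow_card_sub_one_eq_neg_one : ∑ a : k, a ^ (Fintype.card k - 1) = -1 := by
  classical
  have hpow (a : k) : a ^ (Fintype.card k - 1) = 1 - if a = 0 then 1 else 0 := by
    split_ifs with ha
    · rw [ha, zero_pow (Nat.sub_ne_zero_of_lt Fintype.one_lt_card), sub_self]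
    · rw [FiniteField.pow_card_sub_one_eq_one a ha, sub_zero]
  simp [hpow]

theorem sum_add_map_pow {R : Type*} [CommRing R] (f : k →+* R) (x : R) {n : ℕ}
    (hn : n < Fintype.card k) : ∑ a, (x + f a) ^ n = f (∑ a, a ^ n) := by
  have hterm (i : ℕ) (hi : i ∈ Finset.range (n + 1)) (hi0 : i ≠ 0) :
      ∑ a, x ^ i * f a ^ (n - i) * (n.choose i : R) = 0 := by
    have hlow : ∑ a : k, a ^ (n - i) = 0 :=
      FiniteField.sum_pow_lt_card_sub_one k _ (by grind)
    simp_rw [← Finset.sum_mul, ← Finset.mul_sum, ← map_pow, ← map_sum, hlow, map_zero, mul_zero,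
      zero_mul]
  simp_rw [add_pow]
  rw [Finset.sum_comm, Finset.sum_eq_single_of_mem 0 (by simp) hterm]
  simp

end FiniteFieldSums

theorem prod_X_sub_C_eq_X_pow_card_sub_X (k : Type*) [Field k] [Fintype k] :
    ∏ a : k, (X - C a) = X ^ Fintype.card k - X := by
  have hcard := Fintype.one_lt_card (α := k)
  have hroots := FiniteField.roots_X_pow_card_sub_X k
  have hmonic : (X ^ Fintype.card k - X : k[X]).Monic :=
    monic_X_pow_sub (by simpa using hcard)
  rw [← prod_multiset_X_sub_C_of_monic_of_roots_card_eq hmonic, hroots,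
    Finset.prod_eq_multiset_prod]
  rw [hroots, FiniteField.X_pow_card_sub_X_natDegree_eq k hcard, Finset.card_val, Finset.card_univ]

theorem map_zmodCast {n : ℕ} [NeZero n] {F R S : Type*} [Ring R] [Ring S] [FunLike F R S]
    [RingHomClass F R S] (f : F) (a : ZMod n) : f a.cast = a.cast := by
  rw [ZMod.cast_eq_val, ZMod.cast_eq_val, map_natCast]

section ArtinSchreierRoots

variable {p : ℕ} [Fact p.Prime] {R : Type*} [CommRing R] [CharP R p]

theorem prod_X_sub_C_add_zmodCast (x : R) :
    ∏ a : ZMod p, (X - C (x + (a.cast : R))) = X ^ p - X - C (x ^ p - x) := by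
  have hprod := congr(($(prod_X_sub_C_eq_X_pow_card_sub_X (ZMod p)).map
    (ZMod.castHom dvd_rfl R)).comp (X - C x))
  simp only [ZMod.card, Polynomial.map_prod, Polynomial.map_sub, map_X, map_C, Polynomial.map_pow,
    prod_comp, sub_comp, X_comp, C_comp, pow_comp, ZMod.castHom_apply, sub_pow_char, sub_sub,
    ← C_add, ← C_pow] at hprod
  rw [hprod, C_sub]
  ring

theorem exists_eq_add_zmodCast [IsDomain R] {x y : R} (h : y ^ p - y = x ^ p - x) :
    ∃ a : ZMod p, y = x + a.cast := by
  have := congr(($(prod_X_sub_C_add_zmodCast (p := p) x)).eval y)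
  simpa [eval_prod, Finset.prod_eq_zero_iff, h, sub_eq_zero] using this

end ArtinSchreierRoots

theorem trace_pow_char (p : ℕ) [Fact p.Prime] {K L : Type*} [Field K] [Field L] [Algebra K L]
    [CharP K p] (y : L) : Algebra.trace K L (y ^ p) = Algebra.trace K L y ^ p := by
  by_cases h : FiniteDimensional K L ∧ Algebra.IsSeparable K L
  · obtain ⟨_, _⟩ := h
    have : CharP (AlgebraicClosure K) p := charP_of_injective_algebraMap' K p
    apply (algebraMap K (AlgebraicClosure K)).injective
    simp_rw [map_pow, trace_eq_sum_embeddings, sum_pow_char, map_pow]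
  · have htrace : Algebra.trace K L = 0 := by
      rw [not_and_or] at h
      obtain h | h := h
      · exact Algebra.trace_eq_zero_of_not_exists_basis K fun ⟨_, ⟨b⟩⟩ ↦ h (.of_basis b)
      · exact Algebra.trace_eq_zero_of_not_isSeparable h
    simp [htrace, (Fact.out : p.Prime).ne_zero]

theorem pow_char_sub_self_ne_of_trace_ne_zero {p : ℕ} [Fact p.Prime] {K : Type*} [Field K]
    [Algebra (ZMod p) K] {c : K} (hc : Algebra.trace (ZMod p) K c ≠ 0) (y : K) :
    y ^ p - y ≠ c := by
  rintro rfl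
  rw [map_sub, trace_pow_char p, ZMod.pow_card, sub_self] at hc
  exact hc rfl

section ArtinSchreierExtension

variable {K L : Type*} [Field K] [Field L] [Algebra K L] {x : L} {c : K}

theorem isIntegral_of_pow_sub_self_eq {n : ℕ} (hn : 1 < n) (hx : x ^ n - x = algebraMap K L c) :
    IsIntegral K x :=
  ⟨X ^ n - (X + C c), monic_X_pow_sub (by simpa using hn), by simp [← hx]⟩

theorem finiteDimensional_of_pow_sub_self_eq {n : ℕ} (hn : 1 < n)
    (hx : x ^ n - x = algebraMap K L c) (htop : K⟮x⟯ = ⊤) : FiniteDimensional K L := by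
  have := adjoin.finiteDimensional (isIntegral_of_pow_sub_self_eq hn hx)
  rw [htop] at this
  exact topEquiv.toLinearEquiv.finiteDimensional

variable {p : ℕ} [Fact p.Prime] [CharP L p]

theorem isGalois_of_pow_char_sub_self_eq (hx : x ^ p - x = algebraMap K L c) (htop : K⟮x⟯ = ⊤) :
    IsGalois K L := by
  have : CharP K p := (Algebra.charP_iff K L p).2 ‹_›
  have hmap : (X ^ p - X - C c : K[X]).map (algebraMap K L) =
      ∏ a : ZMod p, (X - C (x + (a.cast : L))) := by
    rw [prod_X_sub_C_add_zmodCast, hx]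
    simp
  have hsep : (X ^ p - X - C c : K[X]).Separable := by
    rw [← separable_map (algebraMap K L), hmap, separable_prod_X_sub_C_iff]
    exact (add_right_injective x).comp (ZMod.castHom_injective L)
  have hroot : x ∈ (X ^ p - X - C c : K[X]).rootSet L := by
    simp [mem_rootSet, hsep.ne_zero, hx]
  have : IsSplittingField K L (X ^ p - X - C c) := by
    rw [isSplittingField_iff_intermediateField, hmap]
    refine ⟨.prod fun _ _ ↦ .X_sub_C _, top_unique ?_⟩
    rw [← htop]
    exact adjoin.mono _ _ _ (Set.singleton_subset_iff.2 hroot)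
  exact .of_separable_splitting_field hsep

theorem exists_algEquiv_apply_eq_add_zmodCast (hx : x ^ p - x = algebraMap K L c)
    (σ : Gal(L/K)) : ∃ a : ZMod p, σ x = x + a.cast :=
  exists_eq_add_zmodCast (by rw [← map_pow, ← map_sub, hx, σ.commutes])

/-- The homomorphism `σ ↦ σ x - x` from the Galois group of an extension containing a root `x` of
`X ^ p - X - c` to the additive group of the prime field, written multiplicatively. -/
noncomputable def artinSchreierHom (hx : x ^ p - x = algebraMap K L c) :
    Gal(L/K) →* Multiplicative (ZMod p) :=
  have hshift := exists_algEquiv_apply_eq_add_zmodCast hx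
  .mk' (fun σ ↦ .ofAdd (hshift σ).choose) fun σ τ ↦ by
    apply Multiplicative.toAdd.injective
    apply ZMod.castHom_injective L
    have hmul := calc
      x + (hshift (σ * τ)).choose.cast = σ (τ x) := (hshift (σ * τ)).choose_spec.symm
      _ = σ (x + (hshift τ).choose.cast) := congrArg σ (hshift τ).choose_spec
      _ = σ x + (hshift τ).choose.cast := by rw [map_add, map_zmodCast]
      _ = x + (hshift σ).choose.cast + (hshift τ).choose.cast :=
        congrArg (· + _) (hshift σ).choose_spec
    simpa [add_assoc] using hmul

theorem algEquiv_apply_eq_add_artinSchreierHom (hx : x ^ p - x = algebraMap K L c)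
    (σ : Gal(L/K)) : σ x = x + ((artinSchreierHom hx σ).toAdd.cast : L) :=
  (exists_algEquiv_apply_eq_add_zmodCast hx σ).choose_spec

theorem artinSchreierHom_injective (hx : x ^ p - x = algebraMap K L c) (htop : K⟮x⟯ = ⊤) :
    Function.Injective (artinSchreierHom hx) := by
  have hadjoin : Algebra.adjoin K {x} = ⊤ := by
    rw [← adjoin_simple_toSubalgebra_of_isAlgebraic
      (isIntegral_of_pow_sub_self_eq (Fact.out : p.Prime).one_lt hx).isAlgebraic, htop,
      top_toSubalgebra]
  intro σ τ h
  apply AlgEquiv.coe_toAlgHom_injective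
  refine AlgHom.ext_of_adjoin_eq_top hadjoin (Set.eqOn_singleton.2 ?_)
  change σ x = τ x
  simp [algEquiv_apply_eq_add_artinSchreierHom hx, h]

theorem artinSchreierHom_surjective (hx : x ^ p - x = algebraMap K L c) (htop : K⟮x⟯ = ⊤)
    (hc : ∀ y : K, y ^ p - y ≠ c) : Function.Surjective (artinSchreierHom hx) := by
  have := isGalois_of_pow_char_sub_self_eq hx htop
  have := finiteDimensional_of_pow_sub_self_eq (Fact.out : p.Prime).one_lt hx htop
  have : Fact (Nat.card (Multiplicative (ZMod p))).Prime := ⟨by simpa using Fact.out⟩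
  rw [← MonoidHom.range_eq_top]
  refine (Subgroup.eq_bot_or_eq_top_of_prime_card _).resolve_left fun hbot ↦ ?_
  rw [MonoidHom.range_eq_bot_iff] at hbot
  have hfixed (σ : Gal(L/K)) : σ x = x := by
    simp [algEquiv_apply_eq_add_artinSchreierHom hx, hbot]
  obtain ⟨y, rfl⟩ := mem_bot.1 ((IsGalois.mem_bot_iff_fixed x).2 hfixed)
  exact hc y ((algebraMap K L).injective (by simpa using hx))

/-- The isomorphism of Artin–Schreier theory between the Galois group of `K(x)/K`, where
`x ^ p - x = c` is not of the form `y ^ p - y` with `y ∈ K`, and the additive group of the prime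
field, written multiplicatively. -/
noncomputable def artinSchreierEquiv (hx : x ^ p - x = algebraMap K L c) (htop : K⟮x⟯ = ⊤)
    (hc : ∀ y : K, y ^ p - y ≠ c) : Gal(L/K) ≃* Multiplicative (ZMod p) :=
  .ofBijective (artinSchreierHom hx)
    ⟨artinSchreierHom_injective hx htop, artinSchreierHom_surjective hx htop hc⟩

theorem finrank_of_pow_char_sub_self_eq (hx : x ^ p - x = algebraMap K L c) (htop : K⟮x⟯ = ⊤)
    (hc : ∀ y : K, y ^ p - y ≠ c) : Module.finrank K L = p := by
  have := isGalois_of_pow_char_sub_self_eq hx htop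
  have := finiteDimensional_of_pow_sub_self_eq (Fact.out : p.Prime).one_lt hx htop
  rw [← IsGalois.card_aut_eq_finrank, Nat.card_congr (artinSchreierEquiv hx htop hc).toEquiv]
  simp

theorem algebraMap_trace_pow_eq_sum (hx : x ^ p - x = algebraMap K L c) (htop : K⟮x⟯ = ⊤)
    (hc : ∀ y : K, y ^ p - y ≠ c) (n : ℕ) :
    algebraMap K L (Algebra.trace K L (x ^ n)) = ∑ a : ZMod p, (x + a.cast) ^ n := by
  have := isGalois_of_pow_char_sub_self_eq hx htop
  have := finiteDimensional_of_pow_sub_self_eq (Fact.out : p.Prime).one_lt hx htop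
  rw [trace_eq_sum_automorphisms]
  refine Fintype.sum_equiv
    ((artinSchreierEquiv hx htop hc).toEquiv.trans Multiplicative.toAdd) _ _ fun σ ↦ ?_
  rw [map_pow, algEquiv_apply_eq_add_artinSchreierHom hx]
  rfl

theorem trace_pow_eq_sum_zmod_pow (hx : x ^ p - x = algebraMap K L c) (htop : K⟮x⟯ = ⊤)
    (hc : ∀ y : K, y ^ p - y ≠ c) {n : ℕ} (hn : n < p) :
    Algebra.trace K L (x ^ n) = ((∑ a : ZMod p, a ^ n).cast : K) := by
  apply (algebraMap K L).injective
  rw [algebraMap_trace_pow_eq_sum hx htop hc, map_zmodCast]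
  exact sum_add_map_pow (ZMod.castHom dvd_rfl L) x (by rwa [ZMod.card])

theorem trace_pow_two_mul_char_sub_one (hp : p ≠ 2) (hx : x ^ p - x = algebraMap K L c)
    (htop : K⟮x⟯ = ⊤) (hc : ∀ y : K, y ^ p - y ≠ c) :
    Algebra.trace K L (x ^ (2 * p - 1)) = -c := by
  have : CharP K p := (Algebra.charP_iff K L p).2 ‹_›
  have hp2 : 2 < p := (Fact.out : p.Prime).two_le.lt_of_ne' hp
  have hpow : x ^ (2 * p - 1) = x ^ 1 + algebraMap K L c + c • x ^ (p - 1) := by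
    have hxp : x ^ p = x + algebraMap K L c := by rw [← hx]; ring
    calc x ^ (2 * p - 1) = x ^ p * x ^ (p - 1) := by rw [← pow_add]; congr 1; omega
      _ = x * x ^ (p - 1) + c • x ^ (p - 1) := by rw [hxp, add_mul, Algebra.smul_def]
      _ = _ := by rw [mul_pow_sub_one (by omega), hxp, pow_one]
  have htrace_one : Algebra.trace K L (x ^ 1) = 0 := by
    rw [trace_pow_eq_sum_zmod_pow hx htop hc (by omega),
      FiniteField.sum_pow_lt_card_sub_one _ _ (by rw [ZMod.card]; omega), ZMod.cast_zero]
  have htrace_sub_one : Algebra.trace K L (x ^ (p - 1)) = -1 := by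
    have hsum := sum_pow_card_sub_one_eq_neg_one (k := ZMod p)
    rw [ZMod.card] at hsum
    rw [trace_pow_eq_sum_zmod_pow hx htop hc (by omega), hsum, ZMod.cast_neg dvd_rfl,
      ZMod.cast_one dvd_rfl]
  rw [hpow, map_add, map_add, map_smul, htrace_one, htrace_sub_one, Algebra.trace_algebraMap,
    finrank_of_pow_char_sub_self_eq hx htop hc]
  simp

theorem pow_char_sub_self_ne_pow_two_mul_char_sub_one (hp : p ≠ 2)
    (hx : x ^ p - x = algebraMap K L c) (htop : K⟮x⟯ = ⊤) (hc : ∀ y : K, y ^ p - y ≠ c) (y : L) :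
    y ^ p - y ≠ x ^ (2 * p - 1) := by
  have : CharP K p := (Algebra.charP_iff K L p).2 ‹_›
  intro hy
  have htrace := trace_pow_two_mul_char_sub_one hp hx htop hc
  rw [← hy, map_sub, trace_pow_char p] at htrace
  apply hc (-Algebra.trace K L y)
  rw [((Fact.out : p.Prime).odd_of_ne_two hp).neg_pow, ← neg_eq_iff_eq_neg.2 htrace]
  ring

end ArtinSchreierExtension

section IntermediateFields

variable {F E : Type*} [Field F] [Field E] [Algebra F E] {A B : IntermediateField F E}

theorem adjoin_simple_eq_top_of_le_adjoin_insert (hle : A ≤ B) (x : B)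
    (hB : B ≤ adjoin F (insert (x : E) (A : Set E))) :
    letI : Algebra A B := (inclusion hle).toRingHom.toAlgebra
    A⟮x⟯ = ⊤ := by
  let : Algebra A B := (inclusion hle).toRingHom.toAlgebra
  have : IsScalarTower F A B := .of_algebraMap_eq fun _ ↦ rfl
  have hlift : adjoin F (insert (x : E) (A : Set E)) ≤ lift (A⟮x⟯.restrictScalars F) := by
    rw [adjoin_le_iff, Set.insert_subset_iff]
    exact ⟨(mem_lift x).2 (mem_adjoin_simple_self A x), fun a ha ↦
      (mem_lift (inclusion hle ⟨a, ha⟩)).2 (A⟮x⟯.algebraMap_mem ⟨a, ha⟩)⟩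
  exact eq_top_iff.2 fun y _ ↦ (mem_lift y).1 (hlift (hB y.2))

theorem rank_and_trace_of_artinSchreier_step {p : ℕ} [Fact p.Prime] [CharP F p] (hp : p ≠ 2)
    (hle : A ≤ B) (x : B) (c : A) (hB : B ≤ adjoin F (insert (x : E) (A : Set E)))
    (hx : (x : E) ^ p - x = c) (hc : ∀ y : A, y ^ p - y ≠ c) :
    letI : Algebra A B := (inclusion hle).toRingHom.toAlgebra
    Module.rank F B = p * Module.rank F A ∧
      Algebra.trace A B (x ^ (2 * p - 1)) = -c ∧ ∀ y : B, y ^ p - y ≠ x ^ (2 * p - 1) := by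
  let : Algebra A B := (inclusion hle).toRingHom.toAlgebra
  have : IsScalarTower F A B := .of_algebraMap_eq fun _ ↦ rfl
  have : CharP B p := charP_of_injective_algebraMap' F p
  have hroot : x ^ p - x = algebraMap A B c := Subtype.ext hx
  have htop : A⟮x⟯ = ⊤ := adjoin_simple_eq_top_of_le_adjoin_insert hle x hB
  have := finiteDimensional_of_pow_sub_self_eq (Fact.out : p.Prime).one_lt hroot htop
  refine ⟨?_, trace_pow_two_mul_char_sub_one hp hroot htop hc,
    pow_char_sub_self_ne_pow_two_mul_char_sub_one hp hroot htop hc⟩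
  rw [← rank_mul_rank F A B, ← Module.finrank_eq_rank A B,
    finrank_of_pow_char_sub_self_eq hroot htop hc, mul_comm]

theorem adjoin_image_Iic_succ_le (x : ℕ → E) (i : ℕ) :
    adjoin F (x '' Set.Iic (i + 1)) ≤
      adjoin F (insert (x (i + 1)) (adjoin F (x '' Set.Iic i) : Set E)) := by
  rw [← Order.succ_eq_add_one, Order.Iic_succ, Set.image_insert_eq]
  exact adjoin.mono _ _ _ (Set.insert_subset_insert (subset_adjoin _ _))

end IntermediateFields

theorem cantor_tower_finrank_and_trace_general
    (p : ℕ) [Fact p.Prime] (hodd : p ≠ 2)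
    (F Ω : Type*) [Field F] [CharP F p] [Field Ω] [Algebra F Ω]
    (x : ℕ → Ω)
    (U : ℕ → IntermediateField F Ω)
    (hU : ∀ i, U i = adjoin F (x '' Set.Iic i))
    (hx0 : ∀ y ∈ U 0, y ^ p - y ≠ x 0)
    (hx1 : x 1 ^ p - x 1 = x 0)
    (hxi : ∀ i, 1 ≤ i → x (i + 1) ^ p - x (i + 1) = x i ^ (2 * p - 1))
    (γ : ℕ → Ω) (hγ0 : γ 0 = x 0) (hγ : ∀ i, 1 ≤ i → γ i = x i ^ (2 * p - 1)) :
    (∀ i, Module.rank F (U i) = p ^ i * Module.rank F (U 0)) ∧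
      ∀ i, 1 ≤ i → ∃ (hle : U (i - 1) ≤ U i) (hγi : γ i ∈ U i) (hγi' : γ (i - 1) ∈ U (i - 1)),
        letI : Algebra (U (i - 1)) (U i) := (inclusion hle).toRingHom.toAlgebra
        Algebra.trace (U (i - 1)) (U i) ⟨γ i, hγi⟩ = -(⟨γ (i - 1), hγi'⟩ : U (i - 1)) := by
  have hxU (i) : x i ∈ U i := hU i ▸ subset_adjoin _ _ ⟨i, Set.self_mem_Iic, rfl⟩
  have hγU : ∀ i, γ i ∈ U i
    | 0 => hγ0 ▸ hxU 0
    | i + 1 => hγ (i + 1) i.succ_pos ▸ pow_mem (hxU (i + 1)) _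
  have hrec : ∀ i, x (i + 1) ^ p - x (i + 1) = γ i
    | 0 => hγ0 ▸ hx1
    | i + 1 => hγ (i + 1) i.succ_pos ▸ hxi (i + 1) i.succ_pos
  have hle (i) : U i ≤ U (i + 1) := by
    rw [hU, hU]
    exact adjoin.mono _ _ _ (Set.image_mono (Set.Iic_subset_Iic.2 i.le_succ))
  have hgen (i) : U (i + 1) ≤ adjoin F (insert (x (i + 1)) (U i : Set Ω)) := by
    rw [hU, hU]
    exact adjoin_image_Iic_succ_le x i
  have hpow (i) : (⟨x (i + 1), hxU _⟩ : U (i + 1)) ^ (2 * p - 1) = ⟨γ (i + 1), hγU _⟩ :=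
    Subtype.ext (hγ (i + 1) i.succ_pos).symm
  have hstep (i) (hne : ∀ y : U i, y ^ p - y ≠ ⟨γ i, hγU i⟩) :=
    hpow i ▸ rank_and_trace_of_artinSchreier_step hodd (hle i) ⟨x (i + 1), hxU _⟩ ⟨γ i, hγU i⟩
      (hgen i) (hrec i) hne
  have hne (i) : ∀ y : U i, y ^ p - y ≠ ⟨γ i, hγU i⟩ := by
    induction i with
    | zero => exact fun y hy ↦ hx0 y y.2 (hγ0 ▸ congrArg Subtype.val hy)
    | succ i ih => exact (hstep i ih).2.2
  refine ⟨fun i ↦ ?_, fun i hi ↦ ?_⟩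
  · induction i with
    | zero => rw [pow_zero, one_mul]
    | succ i ih => rw [(hstep i (hne i)).1, ih, pow_succ', mul_assoc]
  · obtain ⟨i, rfl⟩ := Nat.exists_eq_add_of_le' hi
    exact ⟨hle i, hγU _, hγU i, (hstep i (hne i)).2.1⟩

/-- In the Cantor tower over `F_p` with `p` odd, for every `i ≥ 0` the field
`U_i` has degree `p^i · d` over `F_p`, and for every `i ≥ 1` one has
`Tr_{U_i/U_{i−1}}(γ_i) = −γ_{i−1}`. -/
theorem cantor_tower_finrank_and_trace
    (p d : ℕ) [Fact p.Prime] (hodd : p ≠ 2) (hd : 1 ≤ d)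
    (Ω : Type*) [Field Ω] [Algebra (ZMod p) Ω] [IsAlgClosure (ZMod p) Ω]
    (x : ℕ → Ω)
    (U : ℕ → IntermediateField (ZMod p) Ω)
    (hU : ∀ i, U i = IntermediateField.adjoin (ZMod p) (x '' Set.Iic i))
    (hdeg : Module.finrank (ZMod p) ↥(U 0) = d)
    (hx0 : x 0 ∈ U 0)
    (htr0 : Algebra.trace (ZMod p) ↥(U 0) ⟨x 0, hx0⟩ ≠ 0)
    (hx1 : x 1 ^ p - x 1 = x 0)
    (hxi : ∀ i, 1 ≤ i → x (i + 1) ^ p - x (i + 1) = x i ^ (2 * p - 1))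
    (γ : ℕ → Ω) (hγ0 : γ 0 = x 0) (hγ : ∀ i, 1 ≤ i → γ i = x i ^ (2 * p - 1)) :
    (∀ i, Module.finrank (ZMod p) ↥(U i) = p ^ i * d) ∧
      ∀ i, 1 ≤ i → ∃ (hle : U (i - 1) ≤ U i) (hγi : γ i ∈ U i) (hγi' : γ (i - 1) ∈ U (i - 1)),
        letI : Algebra ↥(U (i - 1)) ↥(U i) :=
          (IntermediateField.inclusion hle).toRingHom.toAlgebra
        Algebra.trace ↥(U (i - 1)) ↥(U i) ⟨γ i, hγi⟩ = -(⟨γ (i - 1), hγi'⟩ : ↥(U (i - 1))) := by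
  have hx0_ne (y) (hy : y ∈ U 0) (h : y ^ p - y = x 0) : False :=
    pow_char_sub_self_ne_of_trace_ne_zero htr0 ⟨y, hy⟩ (Subtype.ext h)
  obtain ⟨hrank, htrace⟩ :=
    cantor_tower_finrank_and_trace_general p hodd _ Ω x U hU hx0_ne hx1 hxi γ hγ0 hγ
  exact ⟨fun i ↦ by simp [Module.finrank, hrank i, ← hdeg], htrace⟩
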